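/- arXiv:1802.03534 — 2 statements merged into one kernel-verified Lean document; each statement's English description precedes it below -/
import Mathlib

section
/- Let q > 2 be a prime power. The dual of any linear code over GF(q) with parameters [q²+1, 4, q²−q] is a linear code with parameters [q²+1, q²−3, 4]; that is, the dual has dimension q²−3 and minimum distance exactly 4. -/
/-- The dual code of a linear code `C ⊆ GF(q)ⁿ`:
all vectors `x` with `∑ i, x i * c i = 0` for every `c ∈ C`. -/
def dualCode {n : ℕ} {F : Type} [Field F] (C : Submodule F (Fin n → F)) :
    Submodule F (Fin n → F) where
  carrier := {x | ∀ c ∈ C, ∑ i, x i * c i = 0}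
  zero_mem' := by intro c hc; simp
  add_mem' := by
    intro a b ha hb c hc
    simp only [Set.mem_setOf_eq] at ha hb ⊢
    simp [Pi.add_apply, add_mul, Finset.sum_add_distrib, ha c hc, hb c hc]
  smul_mem' := by
    intro r x hx c hc
    simp only [Set.mem_setOf_eq] at hx ⊢
    simp [Pi.smul_apply, smul_eq_mul, mul_assoc, ← Finset.mul_sum, hx c hc]

/-!
For a set `S` of coordinates, let `V_S` be the space of words supported on `S`. Its dual is `V_Sᶜ`,
so `C⊥ ⊓ V_S = (C ⊔ V_Sᶜ)⊥`, and a dimension count gives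
`dim (C ⊓ V_Sᶜ) + |S| = dim C + dim (C⊥ ⊓ V_S)`.

If the dual had a nonzero word of weight at most `3`, this formula for a set `S` of three
coordinates containing its support would give a subcode of `C` of dimension at least `2` vanishing
on `S`. By Plotkin's averaging argument, a code of dimension at least `2` and minimum distance at
least `q² - q` involves at least `q² - 1` coordinates, while only `q² - 2` coordinates lie outside
`S`. Conversely, a word of weight `q² - q` vanishes on `q + 1 ≥ 4` coordinates, and the formula for
four of them yields a nonzero dual word of weight at most `4`.
-/

open Finset Module

section Supported

/-- The words over `R` with coordinates indexed by `ι` that vanish outside `S`. Intersecting a code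
with `supportedOn R Sᶜ` gives its subcode of words vanishing on `S`. The intersection of kernels
has the shape of `LinearMap.iInfKerProjEquiv`. -/
def supportedOn (R : Type*) {ι : Type*} [Semiring R] (S : Finset ι) : Submodule R (ι → R) :=
  ⨅ i ∈ (S : Set ι)ᶜ, LinearMap.ker (LinearMap.proj i)

variable {R ι : Type*} [Semiring R]

theorem mem_supportedOn {S : Finset ι} {x : ι → R} :
    x ∈ supportedOn R S ↔ ∀ i ∉ S, x i = 0 := by
  simp [supportedOn]

theorem finrank_supportedOn [StrongRankCondition R] (S : Finset ι) :
    finrank R (supportedOn R S) = #S := by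
  classical
  have e : supportedOn R S ≃ₗ[R] (↥(S : Set ι) → R) :=
    LinearMap.iInfKerProjEquiv R (fun _ ↦ R) disjoint_compl_right (Set.union_compl_self _).ge
  simpa using e.finrank_eq

theorem hammingNorm_le_card_of_mem_supportedOn [Fintype ι] [DecidableEq R] {S : Finset ι}
    {x : ι → R} (hx : x ∈ supportedOn R S) : hammingNorm x ≤ #S := by
  refine card_le_card fun i hi ↦ ?_
  by_contra hiS
  exact (mem_filter.mp hi).2 (mem_supportedOn.mp hx i hiS)

end Supported

section Plotkin

theorem card_mul_card_filter_ne_zero_le {G A : Type*} [AddGroup G] [Fintype G] [AddGroup A]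
    [Fintype A] [DecidableEq A] (f : G →+ A) :
    Fintype.card A * #{g | f g ≠ 0} ≤ (Fintype.card A - 1) * Fintype.card G := by
  have card_ker : Nat.card f.ker = #{g | f g = 0} :=
    Nat.subtype_card _ fun g ↦ by simp
  have card_le : Fintype.card G ≤ #{g | f g = 0} * Fintype.card A := by
    rw [← Nat.card_eq_fintype_card, ← f.ker.card_mul_index, AddSubgroup.index_ker, card_ker,
      ← Nat.card_eq_fintype_card (α := A)]
    exact Nat.mul_le_mul_left _ (Nat.card_le_card_of_injective _ Subtype.val_injective)
  have card_split : #{g | f g = 0} + #{g | f g ≠ 0} = Fintype.card G :=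
    card_filter_add_card_filter_not _
  rw [Nat.sub_one_mul, ← card_split]
  rw [← card_split] at card_le
  apply Nat.le_sub_of_add_le
  linarith

variable {F ι : Type*} [Field F] [Fintype F] [DecidableEq F] [Fintype ι]

theorem card_mul_sum_hammingNorm_le {W : Submodule F (ι → F)} [Fintype W] {T : Finset ι}
    (hWT : W ≤ supportedOn F T) :
    Fintype.card F * ∑ c : W, hammingNorm (c : ι → F) ≤
      #T * ((Fintype.card F - 1) * Fintype.card W) := by
  have sum_swap : ∑ c : W, hammingNorm (c : ι → F) = ∑ i, #{c : W | (c : ι → F) i ≠ 0} := by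
    simp only [hammingNorm, card_filter]
    exact sum_comm
  have sum_restrict :
      ∑ i, #{c : W | (c : ι → F) i ≠ 0} = ∑ i ∈ T, #{c : W | (c : ι → F) i ≠ 0} := by
    refine (sum_subset (subset_univ T) fun i _ hi ↦ ?_).symm
    simpa using fun c hc ↦ mem_supportedOn.mp (hWT hc) i hi
  rw [sum_swap, sum_restrict, mul_sum]
  refine sum_le_card_nsmul T _ _ fun i _ ↦ ?_
  exact card_mul_card_filter_ne_zero_le ((LinearMap.proj i).comp W.subtype).toAddMonoidHom

theorem plotkin_bound {W : Submodule F (ι → F)} {T : Finset ι} (hWT : W ≤ supportedOn F T)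
    {d : ℕ} (hd : ∀ c ∈ W, c ≠ 0 → d ≤ hammingNorm c) :
    Fintype.card F * ((Fintype.card F ^ finrank F W - 1) * d) ≤
      #T * ((Fintype.card F - 1) * Fintype.card F ^ finrank F W) := by
  classical
  have := Fintype.ofFinite W
  rw [← card_eq_pow_finrank (K := F) (V := W)]
  refine le_trans (Nat.mul_le_mul_left _ ?_) (card_mul_sum_hammingNorm_le hWT)
  calc (Fintype.card W - 1) * d = ∑ _c ∈ univ.erase (0 : W), d := by simp [card_erase_of_mem]
    _ ≤ ∑ c ∈ univ.erase (0 : W), hammingNorm (c : ι → F) :=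
      sum_le_sum fun c hc ↦ hd c c.2 (by simpa using hc)
    _ ≤ ∑ c : W, hammingNorm (c : ι → F) := sum_le_sum_of_subset (erase_subset _ _)

theorem finrank_le_one_of_card_mul_lt {W : Submodule F (ι → F)} {T : Finset ι}
    (hWT : W ≤ supportedOn F T) {d : ℕ} (hd : ∀ c ∈ W, c ≠ 0 → d ≤ hammingNorm c)
    (hT : Fintype.card F * #T < (Fintype.card F + 1) * d) : finrank F W ≤ 1 := by
  by_contra! two_le
  have plotkin := plotkin_bound hWT hd
  have sq_le : Fintype.card F ^ 2 ≤ Fintype.card F ^ finrank F W :=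
    Nat.pow_le_pow_right Fintype.card_pos two_le
  have one_lt : 1 < Fintype.card F := Fintype.one_lt_card
  generalize Fintype.card F = q at *
  generalize q ^ finrank F W = w at *
  have factor_pos : 0 < (q - 1) * w :=
    Nat.mul_pos (Nat.sub_pos_of_lt one_lt) ((pow_pos (zero_lt_one.trans one_lt) 2).trans_le sq_le)
  have sub_le : (q ^ 2 - 1) * w ≤ q ^ 2 * (w - 1) := by
    rw [Nat.sub_one_mul, Nat.mul_sub_one]
    exact tsub_le_tsub_left sq_le _
  have : q ^ 2 * (w - 1) * d < q ^ 2 * (w - 1) * d := calc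
    q ^ 2 * (w - 1) * d = q * (q * ((w - 1) * d)) := by ring
    _ ≤ q * (#T * ((q - 1) * w)) := Nat.mul_le_mul_left q plotkin
    _ = q * #T * ((q - 1) * w) := (mul_assoc _ _ _).symm
    _ < (q + 1) * d * ((q - 1) * w) := Nat.mul_lt_mul_of_pos_right hT factor_pos
    _ = (q + 1) * (q - 1) * w * d := by ring
    _ = (q ^ 2 - 1) * w * d := by rw [← Nat.sq_sub_sq, one_pow]
    _ ≤ q ^ 2 * (w - 1) * d := Nat.mul_le_mul_right d sub_le
  exact this.false

end Plotkin

section Dual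

variable {n : ℕ} {F : Type} [Field F]

theorem dualCode_eq_comap_dualAnnihilator (C : Submodule F (Fin n → F)) :
    dualCode C = C.dualAnnihilator.comap (dotProductEquiv F (Fin n)).toLinearMap := by
  ext x
  simp only [Submodule.mem_comap, Submodule.mem_dualAnnihilator]
  rfl

theorem finrank_add_finrank_dualCode (C : Submodule F (Fin n → F)) :
    finrank F C + finrank F (dualCode C) = n := by
  rw [dualCode_eq_comap_dualAnnihilator, Submodule.comap_equiv_eq_map_symm,
    LinearEquiv.finrank_map_eq, Subspace.finrank_add_finrank_dualAnnihilator_eq, finrank_fin_fun]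

theorem dualCode_sup (C D : Submodule F (Fin n → F)) :
    dualCode (C ⊔ D) = dualCode C ⊓ dualCode D := by
  simp only [dualCode_eq_comap_dualAnnihilator, Submodule.dualAnnihilator_sup_eq,
    Submodule.comap_inf]

theorem dualCode_supportedOn_compl (S : Finset (Fin n)) :
    dualCode (supportedOn F Sᶜ) = supportedOn F S := by
  ext x
  rw [mem_supportedOn]
  constructor
  · intro hx i hi
    have single_mem : Pi.single i 1 ∈ supportedOn F Sᶜ :=
      mem_supportedOn.mpr fun j hj ↦ Pi.single_eq_of_ne (by rintro rfl; simp [hi] at hj) 1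
    simpa [Pi.single_apply] using hx _ single_mem
  · intro hx c hc
    refine sum_eq_zero fun i _ ↦ ?_
    by_cases hi : i ∈ S
    · rw [mem_supportedOn.mp hc i (by simpa using hi), mul_zero]
    · rw [hx i hi, zero_mul]

theorem finrank_inf_supportedOn_compl_add_card (C : Submodule F (Fin n → F))
    (S : Finset (Fin n)) :
    finrank F ↥(C ⊓ supportedOn F Sᶜ) + #S =
      finrank F C + finrank F ↥(dualCode C ⊓ supportedOn F S) := by
  have sup_dual := finrank_add_finrank_dualCode (C ⊔ supportedOn F Sᶜ)
  rw [dualCode_sup, dualCode_supportedOn_compl] at sup_dual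
  have sup_inf := Submodule.finrank_sup_add_finrank_inf_eq C (supportedOn F Sᶜ)
  rw [finrank_supportedOn] at sup_inf
  have card_compl := card_add_card_compl S
  rw [Fintype.card_fin] at card_compl
  omega

variable [DecidableEq F] {C : Submodule F (Fin n → F)}

theorem lt_hammingNorm_of_mem_dualCode {t : ℕ} (ht : t ≤ n)
    (hC : ∀ S : Finset (Fin n), #S = t → finrank F ↥(C ⊓ supportedOn F Sᶜ) + t ≤ finrank F C)
    {x : Fin n → F} (hx : x ∈ dualCode C) (hx0 : x ≠ 0) : t < hammingNorm x := by
  by_contra! norm_le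
  obtain ⟨S, support_subset, hS⟩ := exists_superset_card_eq norm_le (by simpa using ht)
  have x_mem : x ∈ dualCode C ⊓ supportedOn F S :=
    ⟨hx, mem_supportedOn.mpr fun i hi ↦ by
      by_contra hxi
      exact hi (support_subset (by simpa using hxi))⟩
  have finrank_pos :=
    Submodule.one_le_finrank_iff.mpr ((Submodule.ne_bot_iff _).mpr ⟨x, x_mem, hx0⟩)
  have duality := finrank_inf_supportedOn_compl_add_card C S
  have subcode_le := hC S hS
  omega

theorem exists_mem_dualCode_hammingNorm_le {c : Fin n → F} (hc : c ∈ C) (hc0 : c ≠ 0)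
    (hcn : hammingNorm c + finrank F C ≤ n) :
    ∃ x ∈ dualCode C, x ≠ 0 ∧ hammingNorm x ≤ finrank F C := by
  have card_zeros : #{i | c i = 0} + hammingNorm c = n := by
    simpa [hammingNorm] using card_filter_add_card_filter_not (s := univ) fun i ↦ c i = 0
  obtain ⟨S, hSc, hS⟩ := exists_subset_card_eq (s := {i | c i = 0}) (n := finrank F C) (by omega)
  have c_mem : c ∈ C ⊓ supportedOn F Sᶜ :=
    ⟨hc, mem_supportedOn.mpr fun i hi ↦ by simpa using hSc (by simpa using hi)⟩
  have finrank_pos :=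
    Submodule.one_le_finrank_iff.mpr ((Submodule.ne_bot_iff _).mpr ⟨c, c_mem, hc0⟩)
  have duality := finrank_inf_supportedOn_compl_add_card C S
  obtain ⟨x, ⟨hxC, hxS⟩, hx0⟩ := Submodule.exists_mem_ne_zero_of_ne_bot
    (Submodule.one_le_finrank_iff.mp (show 1 ≤ finrank F ↥(dualCode C ⊓ supportedOn F S) by omega))
  exact ⟨x, hxC, hx0, hS ▸ hammingNorm_le_card_of_mem_supportedOn hxS⟩

end Dual

/-- The dual of any linear code over GF(q), q > 2 a prime power, with
parameters [q²+1, 4, q²−q] is a [q²+1, q²−3, 4] code: it has dimension q²−3 and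
minimum distance exactly 4. -/
theorem dual_of_ovoid_code {q : ℕ} (F : Type) [Field F] [Fintype F] [DecidableEq F]
    (hF : Fintype.card F = q) (hq : 2 < q)
    (C : Submodule F (Fin (q ^ 2 + 1) → F))
    (hdim : Module.finrank F C = 4)
    (hlb : ∀ c ∈ C, c ≠ 0 → q ^ 2 - q ≤ hammingNorm c)
    (hex : ∃ c ∈ C, c ≠ 0 ∧ hammingNorm c = q ^ 2 - q) :
    Module.finrank F (dualCode C) = q ^ 2 - 3 ∧
    (∀ x ∈ dualCode C, x ≠ 0 → 4 ≤ hammingNorm x) ∧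
    (∃ x ∈ dualCode C, x ≠ 0 ∧ hammingNorm x = 4) := by
  have three_mul_le : 3 * q ≤ q ^ 2 := by nlinarith
  have no_short_dual_word : ∀ x ∈ dualCode C, x ≠ 0 → 4 ≤ hammingNorm x := by
    refine fun x hx hx0 ↦ lt_hammingNorm_of_mem_dualCode (by omega) (fun S hS ↦ ?_) hx hx0
    have finrank_le_one : finrank F ↥(C ⊓ supportedOn F Sᶜ) ≤ 1 := by
      refine finrank_le_one_of_card_mul_lt inf_le_right (fun c hc ↦ hlb c hc.1) ?_
      rw [hF, card_compl, Fintype.card_fin, hS]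
      have le_sq : q ≤ q ^ 2 := by omega
      have three_le : 3 ≤ q ^ 2 + 1 := by omega
      zify [le_sq, three_le]
      linarith
    omega
  refine ⟨?_, no_short_dual_word, ?_⟩
  · have := finrank_add_finrank_dualCode C
    omega
  · obtain ⟨c, hc, hc0, hcn⟩ := hex
    obtain ⟨x, hx, hx0, hxn⟩ := exists_mem_dualCode_hammingNorm_le hc hc0 (by omega)
    exact ⟨x, hx, hx0, le_antisymm (hdim ▸ hxn) (no_short_dual_word x hx hx0)⟩
end

section
/- Let p be a prime, q a power of p, r a power of q, and let χ : GF(r) → ℂ be the canonical additive character χ(x) = exp(2π√(−1)·Tr_{r/p}(x)/p), where Tr_{r/p} is the trace from GF(r) to GF(p). Let N > 1 divide r−1, put d = gcd((r−1)/(q−1), N), and fix a primitive element α of GF(r). For a ∈ GF(r), let Z(r,a) be the number of x ∈ GF(r) with Tr_{r/q}(a x^N) = 0. Then q · Z(r,a) = q + r − 1 + (q−1)·d·∑_{z ∈ C_0^{(d,r)}} χ(a z). -/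
open scoped Classical

/-!
The canonical character of `E` is `φ ∘ Tr` for a nontrivial additive character `φ` of `F`, and
`∑ y, φ (y * t)` is `q` for `t = 0` and `0` otherwise. Hence `q * Z` is the sum of
`φ (Tr (a * y * x ^ N))` over all `y : F` and `x : E`. The terms with `x = 0` or `y = 0` contribute
`q + r - 1`. On the remaining ones `(y, x) ↦ y * x ^ N` is a homomorphism `Fˣ × Eˣ →* Eˣ`: since
`Fˣ` is generated by `α ^ ((r - 1) / (q - 1))` and the `N`-th powers by `α ^ N`, its image is
`⟨α ^ d⟩`, and each fibre has `(q - 1) * (r - 1) / ((r - 1) / d) = (q - 1) * d` elements.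
-/

section Group

variable {G H K : Type*}

theorem range_coprod_eq_sup_range [Group G] [Group H] [CommGroup K] (f : G →* K) (g : H →* K) :
    (f.coprod g).range = f.range ⊔ g.range := by
  ext z
  simp [MonoidHom.mem_range, Subgroup.mem_sup]

theorem card_ker_eq_card_mul_index_range [Group G] [Group H] [Finite H] (f : G × H →* H) :
    Nat.card f.ker = Nat.card G * f.range.index := by
  refine Nat.eq_of_mul_eq_mul_right (Nat.card_pos (α := f.range)) ?_
  calc Nat.card f.ker * Nat.card f.range
      = Nat.card (G × H) := by rw [← Subgroup.index_ker, Subgroup.card_mul_index]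
    _ = Nat.card G * f.range.index * Nat.card f.range := by
      rw [Nat.card_prod, mul_assoc, Subgroup.index_mul_card]

theorem sum_comp_eq_card_ker_nsmul_sum_range [Group G] [Fintype G] [Group H] [Fintype H]
    {M : Type*} [AddCommMonoid M] (f : G →* H) (g : H → M) :
    ∑ u, g (f u) = Nat.card f.ker • ∑ z with z ∈ f.range, g z := by
  have card_fiber (z : H) (hz : z ∈ f.range) : Finset.card {u | f u = z} = Nat.card f.ker := by
    rw [MonoidHom.card_fiber_eq_of_mem_range f hz ⟨1, map_one f⟩, Nat.card_eq_fintype_card]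
    exact (Fintype.card_of_subtype _ (by simp [MonoidHom.mem_ker])).symm
  rw [← Finset.sum_fiberwise_of_maps_to' (t := {z | z ∈ f.range}) (by simp), Finset.smul_sum]
  refine Finset.sum_congr rfl fun z hz ↦ ?_
  rw [Finset.sum_const, card_fiber z (Finset.mem_filter_univ z |>.1 hz)]

theorem zpowers_pow_sup_zpowers_pow [Group G] (g : G) (m n : ℕ) :
    Subgroup.zpowers (g ^ m) ⊔ Subgroup.zpowers (g ^ n) = Subgroup.zpowers (g ^ m.gcd n) := by
  apply le_antisymm
  · have pow_mem_of_dvd (k : ℕ) (hk : m.gcd n ∣ k) : g ^ k ∈ Subgroup.zpowers (g ^ m.gcd n) := by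
      obtain ⟨c, rfl⟩ := hk
      exact pow_mul g _ c ▸ pow_mem (Subgroup.mem_zpowers _) c
    simp only [sup_le_iff, Subgroup.zpowers_le]
    exact ⟨pow_mem_of_dvd m (m.gcd_dvd_left n), pow_mem_of_dvd n (m.gcd_dvd_right n)⟩
  · have bezout : g ^ m.gcd n = (g ^ m) ^ m.gcdA n * (g ^ n) ^ m.gcdB n := by
      simp only [← zpow_natCast, ← zpow_mul, ← zpow_add, Nat.gcd_eq_gcd_ab]
    rw [Subgroup.zpowers_le, bezout]
    exact mul_mem (Subgroup.mem_sup_left (zpow_mem (Subgroup.mem_zpowers _) _))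
      (Subgroup.mem_sup_right (zpow_mem (Subgroup.mem_zpowers _) _))

end Group

section CyclicGroup

variable {G : Type*} [CommGroup G] {α : G}

theorem eq_zpowers_pow_index (hα : ∀ x, x ∈ Subgroup.zpowers α) (S : Subgroup G) :
    S = Subgroup.zpowers (α ^ S.index) := by
  have orderOf_mk : orderOf (α : G ⧸ S) = S.index := by
    refine orderOf_eq_card_of_forall_mem_zpowers fun x ↦ ?_
    obtain ⟨y, rfl⟩ := QuotientGroup.mk_surjective x
    obtain ⟨k, rfl⟩ := hα y
    exact ⟨k, rfl⟩
  refine le_antisymm (fun x hx ↦ ?_) (Subgroup.zpowers_le.2 (S.pow_index_mem α))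
  obtain ⟨k, rfl⟩ := hα x
  have index_dvd : (S.index : ℤ) ∣ k := by
    rw [← orderOf_mk, orderOf_dvd_iff_zpow_eq_one]
    exact (QuotientGroup.eq_one_iff (α ^ k)).2 hx
  obtain ⟨l, rfl⟩ := index_dvd
  exact ⟨l, by simp [zpow_mul]⟩

theorem range_powMonoidHom_eq_zpowers (hα : ∀ x, x ∈ Subgroup.zpowers α) (n : ℕ) :
    (powMonoidHom n : G →* G).range = Subgroup.zpowers (α ^ n) := by
  rw [MonoidHom.range_eq_map, ← (Subgroup.eq_top_iff' _).2 hα, MonoidHom.map_zpowers,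
    powMonoidHom_apply]

theorem index_zpowers_pow_of_dvd [Finite G] (hα : ∀ x, x ∈ Subgroup.zpowers α) {d : ℕ}
    (hd : d ∣ Nat.card G) : (Subgroup.zpowers (α ^ d)).index = d := by
  have : IsCyclic G := ⟨α, hα⟩
  rw [← range_powMonoidHom_eq_zpowers hα, IsCyclic.index_powMonoidHom_range,
    Nat.gcd_eq_right hd]

end CyclicGroup

section Sum

variable {M A : Type*} [AddCommMonoid A]

theorem sum_eq_add_sum_units [GroupWithZero M] [Fintype M] (f : M → A) :
    ∑ x, f x = f 0 + ∑ u : Mˣ, f u := by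
  rw [Fintype.sum_eq_add_sum_subtype_ne f 0]
  congr 1
  exact (Fintype.sum_equiv unitsEquivNeZero _ _ fun _ ↦ rfl).symm

theorem sum_setOf_eq_pow_eq_sum_zpowers [Monoid M] [Fintype M] (u : Mˣ) (f : M → A) :
    ∑ z ∈ {z : M | ∃ j : ℕ, z = (u : M) ^ j}.toFinset, f z =
      ∑ z : Mˣ with z ∈ Subgroup.zpowers u, f z := by
  have toFinset_eq_map : {z : M | ∃ j : ℕ, z = (u : M) ^ j}.toFinset =
      ({z | z ∈ Subgroup.zpowers u} : Finset Mˣ).map ⟨Units.val, Units.val_injective⟩ := by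
    ext z
    simp [← mem_powers_iff_mem_zpowers, Submonoid.mem_powers_iff, eq_comm]
  rw [toFinset_eq_map, Finset.sum_map, Function.Embedding.coeFn_mk]

end Sum

section Field

variable (F E : Type*) [Field F] [Field E] [Algebra F E]

/-- The homomorphism `(y, x) ↦ y * x ^ N`, whose image is the cyclotomic class over which the
character sum is taken. -/
def algebraMapMulPow (N : ℕ) : Fˣ × Eˣ →* Eˣ :=
  (Units.map (algebraMap F E : F →* E)).coprod (powMonoidHom N)

theorem index_range_unitsMap_algebraMap [Finite E] :
    (Units.map (algebraMap F E : F →* E)).range.index = (Nat.card E - 1) / (Nat.card F - 1) := by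
  have card_range : Nat.card (Units.map (algebraMap F E : F →* E)).range = Nat.card F - 1 := by
    rw [← Nat.card_units]
    exact Nat.card_range_of_injective (Units.map_injective (algebraMap F E).injective)
  refine Nat.eq_div_of_mul_eq_left (card_range ▸ Nat.card_pos.ne') ?_
  rw [← card_range, Subgroup.index_mul_card, Nat.card_units]

variable {E} {α : Eˣ}

theorem range_algebraMapMulPow [Finite E] (hα : ∀ x, x ∈ Subgroup.zpowers α) (N : ℕ) :
    (algebraMapMulPow F E N).range =
      Subgroup.zpowers (α ^ ((Nat.card E - 1) / (Nat.card F - 1)).gcd N) := by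
  rw [algebraMapMulPow, range_coprod_eq_sup_range, eq_zpowers_pow_index hα (Units.map _).range,
    index_range_unitsMap_algebraMap, range_powMonoidHom_eq_zpowers hα,
    zpowers_pow_sup_zpowers_pow]

theorem card_ker_algebraMapMulPow [Finite E] (hα : ∀ x, x ∈ Subgroup.zpowers α) (N : ℕ) :
    Nat.card (algebraMapMulPow F E N).ker =
      (Nat.card F - 1) * ((Nat.card E - 1) / (Nat.card F - 1)).gcd N := by
  have gcd_dvd_card : ((Nat.card E - 1) / (Nat.card F - 1)).gcd N ∣ Nat.card Eˣ := by
    rw [← index_range_unitsMap_algebraMap F E]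
    exact (Nat.gcd_dvd_left _ _).trans (Subgroup.index_dvd_card _)
  rw [card_ker_eq_card_mul_index_range, range_algebraMapMulPow F hα,
    index_zpowers_pow_of_dvd hα gcd_dvd_card, Nat.card_units]

end Field

section Orthogonality

variable {F E R : Type*} [Field F] [Fintype F] [CommRing E] [Algebra F E] [CommRing R] [IsDomain R]
  {φ : AddChar F R}

theorem sum_addChar_trace_algebraMap_mul (hφ : φ ≠ 1) (b : E) :
    ∑ y : F, φ (Algebra.trace F E (algebraMap F E y * b)) =
      if Algebra.trace F E b = 0 then (Fintype.card F : R) else 0 := by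
  simpa [← Algebra.smul_def] using
    AddChar.sum_mulShift (Algebra.trace F E b) (AddChar.IsPrimitive.of_ne_one hφ)

theorem card_mul_ncard_trace_eq_zero (hφ : φ ≠ 1) {X : Type*} [Fintype X] (f : X → E) :
    (Fintype.card F : R) * {x | Algebra.trace F E (f x) = 0}.ncard =
      ∑ x, ∑ y : F, φ (Algebra.trace F E (algebraMap F E y * f x)) := by
  simp only [sum_addChar_trace_algebraMap_mul hφ, ← Finset.sum_filter, Finset.sum_const,
    nsmul_eq_mul, Set.ncard_eq_toFinset_card', Set.toFinset_ofPred]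
  exact mul_comm _ _

end Orthogonality

section CharacterSum

variable {F E : Type*} [Field F] [Fintype F] [Field E] [Fintype E] [Algebra F E]

theorem sum_sum_algebraMap_mul_pow {A : Type*} [AddCommMonoid A] {N : ℕ} (hN : N ≠ 0) (g : E → A) :
    ∑ x : E, ∑ y : F, g (algebraMap F E y * x ^ N) =
      Fintype.card F • g 0 + (Fintype.card E - 1) • g 0 + ∑ u, g (algebraMapMulPow F E N u) := by
  rw [sum_eq_add_sum_units, add_assoc]
  congr 1
  · simp [hN]
  simp only [sum_eq_add_sum_units (M := F), Finset.sum_add_distrib]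
  congr 1
  · simp [Fintype.card_units]
  rw [Finset.sum_comm, Fintype.sum_prod_type]
  simp [algebraMapMulPow]

theorem sum_sum_algebraMap_mul_pow_eq_sum_zpowers {A : Type*} [AddCommMonoid A] {N : ℕ}
    (hN : N ≠ 0) {α : Eˣ} (hα : ∀ x, x ∈ Subgroup.zpowers α) (g : E → A) :
    let d := ((Fintype.card E - 1) / (Fintype.card F - 1)).gcd N
    ∑ x : E, ∑ y : F, g (algebraMap F E y * x ^ N) =
      Fintype.card F • g 0 + (Fintype.card E - 1) • g 0 +
        ((Fintype.card F - 1) * d) • ∑ z : Eˣ with z ∈ Subgroup.zpowers (α ^ d), g z := by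
  intro d
  rw [sum_sum_algebraMap_mul_pow hN,
    sum_comp_eq_card_ker_nsmul_sum_range _ (fun z : Eˣ ↦ g z), card_ker_algebraMapMulPow F hα]
  simp only [range_algebraMapMulPow F hα, Nat.card_eq_fintype_card, d]

theorem character_sum_formula_for_Z_general {R : Type*} [CommRing R] [IsDomain R]
    {φ : AddChar F R} (hφ : φ ≠ 1) {α : Eˣ} (hα : ∀ x, x ∈ Subgroup.zpowers α) {N : ℕ}
    (hN : N ≠ 0) (a : E) :
    let d := ((Fintype.card E - 1) / (Fintype.card F - 1)).gcd N
    (Fintype.card F : R) * {x : E | Algebra.trace F E (a * x ^ N) = 0}.ncard =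
      Fintype.card F + Fintype.card E - 1 + (Fintype.card F - 1) * d *
        ∑ z ∈ {z : E | ∃ j : ℕ, z = ((α : E) ^ d) ^ j}.toFinset, φ (Algebra.trace F E (a * z)) := by
  intro d
  calc (Fintype.card F : R) * {x : E | Algebra.trace F E (a * x ^ N) = 0}.ncard
      = ∑ x : E, ∑ y : F, φ (Algebra.trace F E (a * (algebraMap F E y * x ^ N))) := by
        simp only [card_mul_ncard_trace_eq_zero hφ, mul_left_comm a]
    _ = Fintype.card F + (Fintype.card E - 1) + (Fintype.card F - 1) * d *
          ∑ z : Eˣ with z ∈ Subgroup.zpowers (α ^ d), φ (Algebra.trace F E (a * z)) := by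
        rw [sum_sum_algebraMap_mul_pow_eq_sum_zpowers hN hα fun z ↦ φ (Algebra.trace F E (a * z))]
        simp [d, Nat.cast_sub Fintype.card_pos]
    _ = _ := by
        rw [← sum_setOf_eq_pow_eq_sum_zpowers _ fun z ↦ φ (Algebra.trace F E (a * z)),
          Units.val_pow_eq_pow_val, add_sub_assoc]

end CharacterSum

section CanonicalCharacter

theorem stdAddChar_comp_trace_ne_one (p : ℕ) [Fact p.Prime] (K : Type*) [Field K] [Finite K]
    [Algebra (ZMod p) K] :
    (ZMod.stdAddChar (N := p)).compAddMonoidHom (Algebra.trace (ZMod p) K).toAddMonoidHom ≠ 1 := by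
  obtain ⟨y, hy⟩ := Algebra.trace_surjective (ZMod p) K 1
  refine AddChar.ne_one_iff.2 ⟨y, fun h ↦ one_ne_zero (α := ZMod p) ?_⟩
  apply ZMod.injective_stdAddChar
  simpa [hy] using h

theorem exists_addChar_trace_eq_exp (p : ℕ) [Fact p.Prime] (F E : Type*) [Field F] [Field E]
    [Finite E] [Algebra F E] [Algebra (ZMod p) E] :
    ∃ φ : AddChar F ℂ, φ ≠ 1 ∧ ∀ x : E, φ (Algebra.trace F E x) =
      Complex.exp (2 * Real.pi * Complex.I * ((Algebra.trace (ZMod p) E x).val : ℂ) / p) := by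
  have : Finite F := .of_injective _ (algebraMap F E).injective
  have : CharP E p := charP_of_injective_algebraMap (algebraMap (ZMod p) E).injective p
  have : CharP F p := (algebraMap F E).charP (algebraMap F E).injective p
  let : Algebra (ZMod p) F := ZMod.algebra F p
  have : IsScalarTower (ZMod p) F E := .of_algebraMap_eq' (Subsingleton.elim _ _)
  refine ⟨_, stdAddChar_comp_trace_ne_one p F, fun x ↦ ?_⟩
  simp [Algebra.trace_trace, ZMod.stdAddChar_apply, ZMod.toCircle_apply]

end CanonicalCharacter

/-- With χ the canonical additive character of GF(r), N > 1 dividing r−1,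
d = gcd((r−1)/(q−1), N), and Z(r,a) = #{x : Tr_{r/q}(ax^N) = 0}, one has
q·Z(r,a) = q + r − 1 + (q−1)·d·∑_{z ∈ C₀^{(d,r)}} χ(az). -/
theorem character_sum_formula_for_Z {p q r N : ℕ} [Fact p.Prime]
    (F E : Type) [Field F] [Fintype F] [Field E] [Fintype E]
    [Algebra F E] [Algebra (ZMod p) E]
    (hF : Fintype.card F = q) (hE : Fintype.card E = r)
    (hq : ∃ a : ℕ, 0 < a ∧ q = p ^ a) (hr : ∃ t : ℕ, 0 < t ∧ r = q ^ t)
    (α : Eˣ) (hα : ∀ x : Eˣ, x ∈ Subgroup.zpowers α)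
    (hN : 1 < N) (hdvd : N ∣ r - 1)
    (a : E) :
    let χ : E → ℂ := fun x =>
      Complex.exp (2 * Real.pi * Complex.I * ((Algebra.trace (ZMod p) E x).val : ℂ) / p)
    let d : ℕ := Nat.gcd ((r - 1) / (q - 1)) N
    (q : ℂ) * {x : E | Algebra.trace F E (a * x ^ N) = 0}.ncard
      = q + r - 1 + (q - 1) * d *
          ∑ z ∈ {z : E | ∃ j : ℕ, z = ((α : E) ^ d) ^ j}.toFinset, χ (a * z) := by
  obtain ⟨φ, hφ, hφχ⟩ := exists_addChar_trace_eq_exp p F E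
  subst hF hE
  simpa only [hφχ] using character_sum_formula_for_Z_general hφ hα (Nat.ne_zero_of_lt hN) a
end
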